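/- arXiv:1607.08413 — 3 statements merged into one kernel-verified Lean document; each statement's English description precedes it below -/
import Mathlib

section
/- Let n ≥ 4 be an integer and let Λ ⊂ ℝ² be a closed set that is 2-periodic with respect to the second variable. Then for every k with 2 ≤ k ≤ n−2, one has Π^{k*}_{ne}(Λ) ⊂ Π^{k*}_{su}(Λ). -/
open MeasureTheory Complex

/-- Fourier transform with the convention `f̂(ξ) = ∫ e^{πixξ} f(x) dx`. -/
noncomputable def FT (f : ℝ → ℂ) (ξ : ℝ) : ℂ :=
  ∫ x : ℝ, Complex.exp (Real.pi * Complex.I * x * ξ) * f x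

/-- `e^{πiη}`. -/
noncomputable def cexpEta (η : ℝ) : ℂ := Complex.exp (Real.pi * Complex.I * η)

/-- `Λ` is 2-periodic with respect to the second variable. -/
def Periodic2 (Λ : Set (ℝ × ℝ)) : Prop :=
  ∀ ξ η : ℝ, (ξ, η) ∈ Λ ↔ (ξ, η + 2) ∈ Λ

/-- The projection `Π(Λ)` of `Λ` on the x-axis. -/
def proj (Λ : Set (ℝ × ℝ)) : Set ℝ := {ξ | ∃ η : ℝ, (ξ, η) ∈ Λ}

/-- `Img(ξ) = {η ∈ [0,2) : (ξ,η) ∈ Λ}`. -/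
def Img (Λ : Set (ℝ × ℝ)) (ξ : ℝ) : Set ℝ := {η | η ∈ Set.Ico (0 : ℝ) 2 ∧ (ξ, η) ∈ Λ}

/-- `Π^k(Λ)` for `k < n`: points of `Π(Λ)` whose `Img` has exactly `k` elements. -/
def projExact (Λ : Set (ℝ × ℝ)) (k : ℕ) : Set ℝ :=
  {ξ | ξ ∈ proj Λ ∧ (Img Λ ξ).encard = k}

/-- `Π^n(Λ)`: points of `Π(Λ)` whose `Img` has at least `n` elements. -/
def projAtLeast (Λ : Set (ℝ × ℝ)) (n : ℕ) : Set ℝ :=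
  {ξ | ξ ∈ proj Λ ∧ (n : ℕ∞) ≤ (Img Λ ξ).encard}

/-- `ψ ∈ P^{E,ξ}_l` : there are an open interval `I ∋ ξ` and `φ_1,…,φ_{l-1} ∈ L¹(ℝ)` with
`φ̂_1 + φ̂_2 ψ + ⋯ + φ̂_{l-1} ψ^{l-2} + ψ^{l-1} = 0` on `I ∩ E`. -/
def Pmem (E : Set ℝ) (ξ : ℝ) (l : ℕ) (ψ : ℝ → ℂ) : Prop :=
  ∃ a b : ℝ, ξ ∈ Set.Ioo a b ∧
    ∃ φ : Fin (l - 1) → ℝ → ℂ, (∀ i, Integrable (φ i)) ∧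
      ∀ x ∈ Set.Ioo a b ∩ E,
        (∑ i : Fin (l - 1), FT (φ i) x * ψ x ^ (i : ℕ)) + ψ x ^ (l - 1) = 0

/-- `Π^{1*}(Λ)`: those `ξ ∈ Π^1(Λ)` such that `χ ∈ P^{Π^1(Λ),ξ}_n`, where
`χ(ξ') = e^{πiη}` with `η` the unique element of `Img(ξ')`. -/
def projOneStar (Λ : Set (ℝ × ℝ)) (n : ℕ) : Set ℝ :=
  {ξ | ξ ∈ projExact Λ 1 ∧ ∃ χ : ℝ → ℂ,
    (∀ ξ' ∈ projExact Λ 1, ∀ η ∈ Img Λ ξ', χ ξ' = cexpEta η) ∧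
    Pmem (projExact Λ 1) ξ n χ}

/-- `Π^{k*}_{su}(Λ)`. -/
def projStarSu (Λ : Set (ℝ × ℝ)) (n k : ℕ) : Set ℝ :=
  {ξ | ξ ∈ projExact Λ k ∧ ∃ a b : ℝ, ξ ∈ Set.Ioo a b ∧
    ∃ φ : Fin (n - 1) → ℝ → ℂ, (∀ i, Integrable (φ i)) ∧
      ∀ ξ' ∈ Set.Ioo a b ∩ projExact Λ k, ∀ η ∈ Img Λ ξ',
        (∑ i : Fin (n - 1), FT (φ i) ξ' * cexpEta η ^ (i : ℕ)) = -(cexpEta η ^ (n - 1))}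

/-- `Π^{k*}_{ne}(Λ)` for `k ≥ 2`. -/
def projStarNe (Λ : Set (ℝ × ℝ)) (k : ℕ) : Set ℝ :=
  {ξ | ξ ∈ projExact Λ k ∧ ∃ a b : ℝ, ξ ∈ Set.Ioo a b ∧
    ∃ φ : Fin k → ℝ → ℂ, (∀ i, Integrable (φ i)) ∧
      ∀ ξ' ∈ Set.Ioo a b ∩ projExact Λ k, ∀ η ∈ Img Λ ξ',
        (∑ i : Fin k, FT (φ i) ξ' * cexpEta η ^ (i : ℕ)) = -(cexpEta η ^ k)}

/-- `(Γ, Λ)` with `Γ = ℝ × {0,…,n-1}` is a Heisenberg uniqueness pair: every admissible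
measure `μ = Σ_m (x ↦ (x,m))_*(f_m dx)` (with each `f_m ∈ L¹(ℝ)`) whose Fourier transform
`μ̂(ξ,η) = Σ_m e^{mπiη} f̂_m(ξ)` vanishes on `Λ` must be zero, i.e. each `f_m = 0` a.e. -/
def IsHUP (n : ℕ) (Λ : Set (ℝ × ℝ)) : Prop :=
  ∀ f : Fin n → ℝ → ℂ, (∀ m, Integrable (f m)) →
    (∀ ξ η : ℝ, (ξ, η) ∈ Λ → ∑ m : Fin n, cexpEta η ^ (m : ℕ) * FT (f m) ξ = 0) →
    ∀ m, f m =ᵐ[volume] (0 : ℝ → ℂ)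

theorem sum_append_zero_mul_pow {R : Type*} [Semiring R] (m : ℕ) {d : ℕ} (c : Fin d → R) (z : R) :
    ∑ i : Fin (m + d), Fin.append 0 c i * z ^ (i : ℕ) = (∑ i, c i * z ^ (i : ℕ)) * z ^ m := by
  simp [Fin.sum_univ_add, Finset.sum_mul, mul_assoc, ← pow_add, add_comm]

theorem FT_zero (ξ : ℝ) : FT 0 ξ = 0 := by
  simp [FT]

theorem FT_append_zero (m : ℕ) {d : ℕ} (φ : Fin d → ℝ → ℂ) (i : Fin (m + d)) (ξ : ℝ) :
    FT (Fin.append 0 φ i) ξ = Fin.append 0 (fun j ↦ FT (φ j) ξ) i := by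
  cases i using Fin.addCases <;> simp [FT_zero]

/-- The points `ξ ∈ Π^k(Λ)` near which the numbers `e^{πiη}`, `η ∈ Img(ξ')`, satisfy a monic
polynomial equation of degree `d` whose lower coefficients are Fourier transforms at `ξ'` of
functions in `L¹(ℝ)`. The sets `Π^{k*}_{ne}(Λ)` and `Π^{k*}_{su}(Λ)` are the cases `d = k` and
`d = n - 1`. -/
def monicRelationLocus (Λ : Set (ℝ × ℝ)) (k d : ℕ) : Set ℝ :=
  {ξ | ξ ∈ projExact Λ k ∧ ∃ a b : ℝ, ξ ∈ Set.Ioo a b ∧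
    ∃ φ : Fin d → ℝ → ℂ, (∀ i, Integrable (φ i)) ∧
      ∀ ξ' ∈ Set.Ioo a b ∩ projExact Λ k, ∀ η ∈ Img Λ ξ',
        (∑ i : Fin d, FT (φ i) ξ' * cexpEta η ^ (i : ℕ)) = -(cexpEta η ^ d)}

theorem projStarNe_eq_monicRelationLocus (Λ : Set (ℝ × ℝ)) (k : ℕ) :
    projStarNe Λ k = monicRelationLocus Λ k k :=
  rfl

theorem projStarSu_eq_monicRelationLocus (Λ : Set (ℝ × ℝ)) (n k : ℕ) :
    projStarSu Λ n k = monicRelationLocus Λ k (n - 1) :=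
  rfl

/-- Multiplying a relation of degree `d` by `e^{mπiη}` gives one of degree `m + d`, whose `m` new
coefficients are transforms of the zero function. -/
theorem monotone_monicRelationLocus (Λ : Set (ℝ × ℝ)) (k : ℕ) :
    Monotone (monicRelationLocus Λ k) := by
  rintro d _ hd ξ ⟨hξ, a, b, hab, φ, hφ, hrel⟩
  obtain ⟨m, rfl⟩ := Nat.exists_eq_add_of_le' hd
  have hint : ∀ i, Integrable (Fin.append (0 : Fin m → ℝ → ℂ) φ i) := by
    simp [Fin.forall_fin_add, hφ]
  refine ⟨hξ, a, b, hab, Fin.append 0 φ, hint, fun ξ' hξ' η hη ↦ ?_⟩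
  calc ∑ i, FT (Fin.append 0 φ i) ξ' * cexpEta η ^ (i : ℕ)
      = (∑ i, FT (φ i) ξ' * cexpEta η ^ (i : ℕ)) * cexpEta η ^ m := by
        simp only [FT_append_zero, sum_append_zero_mul_pow]
    _ = -(cexpEta η ^ (m + d)) := by
        rw [hrel ξ' hξ' η hη, neg_mul, ← pow_add, add_comm]

theorem ne_subset_su_general (Λ : Set (ℝ × ℝ)) {n k : ℕ} (hkn : k < n) :
    projStarNe Λ k ⊆ projStarSu Λ n k := by
  rw [projStarNe_eq_monicRelationLocus, projStarSu_eq_monicRelationLocus]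
  exact monotone_monicRelationLocus Λ k (Nat.le_sub_one_of_lt hkn)

theorem ne_subset_su (n : ℕ) (hn : 4 ≤ n) (Λ : Set (ℝ × ℝ))
    (hclosed : IsClosed Λ) (hper : Periodic2 Λ) :
    ∀ k : ℕ, 2 ≤ k → k ≤ n - 2 → projStarNe Λ k ⊆ projStarSu Λ n k :=
  fun _ _ hkn ↦ ne_subset_su_general Λ (by omega)
end

section
/- Let n ≥ 2 be an integer and let Λ ⊂ ℝ² be a closed set that is 2-periodic with respect to the second variable. Let 2 ≤ k ≤ n−1 and let I be a nonempty open interval such that I ∩ Π^{k*}_{ne}(Λ) is dense in I. Then there exists a nonempty open subinterval J ⊂ I such that J ∩ Π(Λ) ⊂ ⋃_{j=k}^{n} Π^j(Λ). -/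
open MeasureTheory Complex

/-!
Near a point `ξ₀` of `Π^{k*}_{ne}(Λ)` the fibre of `Λ` over `ξ ∈ Π^k(Λ)`, read on the unit circle
through `η ↦ e^{πiη}`, is the full set of roots of a monic polynomial of degree `k` whose
coefficients are Fourier transforms of integrable functions, hence continuous in `ξ`. Continuity of
roots makes the fibres lower hemicontinuous at `ξ₀` along `Π^k(Λ)`. As `Λ` is closed and periodic,
the fibres are also upper hemicontinuous, so that meeting a given closed set is a closed condition
on `ξ` and lower hemicontinuity extends to the closure of `Π^k(Λ)`, which is a neighbourhood of
`ξ₀`. Disjoint neighbourhoods of the `k` points over `ξ₀` then each meet every nearby fibre.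
-/

section Hemicontinuity

open Set Filter Topology

variable {X Y Z : Type*} [TopologicalSpace X] [TopologicalSpace Y] [TopologicalSpace Z]

lemma upperHemicontinuous_fiber_of_isCompact {Γ : Set (X × Y)} (hΓ : IsClosed Γ) {K : Set Y}
    (hK : IsCompact K) : UpperHemicontinuous fun x ↦ {y ∈ K | (x, y) ∈ Γ} := by
  refine upperHemicontinuous_iff_forall_isOpen.2 fun x u hu hxu ↦ ?_
  suffices hnear : ∀ᶠ x' in 𝓝 x, ∀ y ∈ K, (x', y) ∈ Γ → y ∈ u by
    filter_upwards [hnear] with x' hx' y hy using hx' y hy.1 hy.2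
  refine hK.eventually_forall_of_forall_eventually fun y hy ↦ ?_
  by_cases hxy : (x, y) ∈ Γ
  · filter_upwards [continuousAt_snd.eventually (hu.mem_nhds (hxu ⟨hy, hxy⟩))] with q hq _ using hq
  · filter_upwards [hΓ.isOpen_compl.mem_nhds hxy] with q hq hqΓ using absurd hqΓ hq

lemma upperHemicontinuous_image {F : X → Set Y} (hF : UpperHemicontinuous F) {g : Y → Z}
    (hg : Continuous g) : UpperHemicontinuous fun x ↦ g '' F x := by
  refine upperHemicontinuous_iff_forall_isOpen.2 fun x u hu hxu ↦ ?_
  simp only [image_subset_iff] at hxu ⊢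
  exact hF.forall_isOpen x _ (hu.preimage hg) hxu

lemma lowerHemicontinuousAt_of_within_of_closure_mem_nhds [RegularSpace Y] {F : X → Set Y}
    {s : Set X} {x : X} (hupper : UpperHemicontinuous F)
    (hlower : LowerHemicontinuousWithinAt F s x) (hs : closure s ∈ 𝓝 x) :
    LowerHemicontinuousAt F x := by
  rw [lowerHemicontinuousAt_iff]
  rintro u hu ⟨y, hyF, hyu⟩
  obtain ⟨K, hKy, hK, hKu⟩ := exists_mem_nhds_isClosed_subset (hu.mem_nhds hyu)
  have hmeets : IsClosed {x' | (F x' ∩ K).Nonempty} := (hupper.inter hK).isClosed_domain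
  obtain ⟨v, hv, hxv, hvs⟩ := mem_nhdsWithin.1 <|
    lowerHemicontinuousWithinAt_iff.1 hlower _ isOpen_interior
      ⟨y, hyF, mem_interior_iff_mem_nhds.2 hKy⟩
  have hvs' : v ∩ s ⊆ {x' | (F x' ∩ K).Nonempty} := fun x' hx' ↦
    (hvs hx').mono (inter_subset_inter_right _ interior_subset)
  filter_upwards [hv.mem_nhds hxv, hs] with x' hx'v hx's
  exact (closure_minimal hvs' hmeets (hv.inter_closure ⟨hx'v, hx's⟩)).mono
    (inter_subset_inter_right _ hKu)

lemma eventually_le_encard_of_lowerHemicontinuousAt [T2Space Y] {F : X → Set Y} {x : X} {k : ℕ}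
    (hF : LowerHemicontinuousAt F x) (hk : k ≤ (F x).encard) :
    ∀ᶠ x' in 𝓝 x, k ≤ (F x').encard := by
  obtain ⟨t, htF, htk⟩ := exists_subset_encard_eq hk
  have ht : t.Finite := finite_of_encard_eq_coe htk
  obtain ⟨U, hU, hdisj⟩ := ht.t2_separation
  have hmeets : ∀ᶠ x' in 𝓝 x, ∀ y ∈ t, (F x' ∩ U y).Nonempty :=
    (eventually_all_finite ht).2 fun y hy ↦
      lowerHemicontinuousAt_iff.1 hF _ (hU y).2 ⟨y, htF hy, (hU y).1⟩
  filter_upwards [hmeets] with x' hx'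
  choose! g hg using hx'
  have hg_inj : InjOn g t := fun y hy z hz hyz ↦
    hdisj.elim_set hy hz (g y) (hg y hy).2 (hyz ▸ (hg z hz).2)
  exact htk ▸ encard_le_encard_of_injOn (fun y hy ↦ (hg y hy).1) hg_inj

end Hemicontinuity

section Roots

open Polynomial Set Filter Topology

/-- The monic polynomial `X ^ k + c_{k-1} X ^ (k-1) + ⋯ + c_0` with prescribed lower coefficients:
the relation defining `Π^{k*}_{ne}(Λ)` says that `e^{πiη}` is a root of it. -/
noncomputable def monicOfCoeffs {R : Type*} [Semiring R] {k : ℕ} (c : Fin k → R) : R[X] :=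
  X ^ k + ∑ i : Fin k, C (c i) * X ^ (i : ℕ)

lemma monic_monicOfCoeffs {R : Type*} [Semiring R] {k : ℕ} (c : Fin k → R) :
    (monicOfCoeffs c).Monic :=
  monic_X_pow_add (degree_sum_fin_lt c)

lemma natDegree_monicOfCoeffs {R : Type*} [Semiring R] [Nontrivial R] {k : ℕ} (c : Fin k → R) :
    (monicOfCoeffs c).natDegree = k := by
  refine natDegree_eq_of_degree_eq_some ?_
  rw [monicOfCoeffs, degree_add_eq_left_of_degree_lt] <;> simp [degree_sum_fin_lt c]

lemma eval_monicOfCoeffs {R : Type*} [CommSemiring R] {k : ℕ} (c : Fin k → R) (z : R) :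
    (monicOfCoeffs c).eval z = z ^ k + ∑ i : Fin k, c i * z ^ (i : ℕ) := by
  simp [monicOfCoeffs, eval_finsetSum]

lemma rootSet_eq_of_natDegree_le_encard {R : Type*} [CommRing R] [IsDomain R] {p : R[X]}
    (hp : p ≠ 0) {S : Set R} (hroot : ∀ w ∈ S, p.IsRoot w) (hcard : p.natDegree ≤ S.encard) :
    p.rootSet R = S := by
  have hfin : (p.rootSet R).Finite := p.rootSet_finite R
  refine (hfin.eq_of_subset_of_encard_le' (fun w hw ↦ ?_) ?_).symm
  · simpa [mem_rootSet, hp] using hroot w hw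
  · rw [← hfin.cast_ncard_eq]
    exact le_trans (mod_cast p.ncard_rootSet_le R) hcard

variable {𝕜 : Type*} [NormedField 𝕜]

lemma exists_mem_rootSet_dist_lt {p : 𝕜[X]} (hp : p.Monic) (hsplits : p.Splits) {z : 𝕜} {ε : ℝ}
    (hε : 0 ≤ ε) (hz : ‖p.eval z‖ < ε ^ p.natDegree) : ∃ w ∈ p.rootSet 𝕜, dist w z < ε := by
  contrapose! hz
  calc ε ^ p.natDegree = (p.roots.map fun _ ↦ ε).prod := by
        simp [hsplits.natDegree_eq_card_roots]
    _ ≤ (p.roots.map fun w ↦ ‖z - w‖).prod := by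
        refine Multiset.prod_map_le_prod_map₀ _ _ (fun _ _ ↦ hε) fun w hw ↦ ?_
        rw [← dist_eq_norm, dist_comm]
        exact hz w (by simpa [mem_rootSet, hp.ne_zero] using hw)
    _ = ‖p.eval z‖ := by
        rw [hsplits.eval_eq_prod_roots_of_monic hp]
        exact p.roots.prod_hom' normHom fun w ↦ z - w

lemma lowerHemicontinuousWithinAt_rootSet {X : Type*} [TopologicalSpace X] {p : X → 𝕜[X]}
    {s : Set X} {x : X} {k : ℕ} (hmonic : ∀ x, (p x).Monic) (hdeg : ∀ x, (p x).natDegree = k)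
    (hsplits : ∀ x, (p x).Splits)
    (hcont : ∀ z, ContinuousWithinAt (fun x ↦ (p x).eval z) s x) :
    LowerHemicontinuousWithinAt (fun x ↦ (p x).rootSet 𝕜) s x := by
  rw [lowerHemicontinuousWithinAt_iff]
  rintro u hu ⟨z, hz, hzu⟩
  obtain ⟨ε, hε, hball⟩ := Metric.isOpen_iff.1 hu z hzu
  have hz_root : ‖(p x).eval z‖ < ε ^ k := by
    rw [show (p x).eval z = 0 by simpa using (mem_rootSet.1 hz).2, norm_zero]
    exact pow_pos hε k
  filter_upwards [(hcont z).norm.eventually_lt_const hz_root] with x' hx'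
  obtain ⟨w, hw, hwz⟩ :=
    exists_mem_rootSet_dist_lt (hmonic x') (hsplits x') hε.le ((hdeg x').symm ▸ hx')
  exact ⟨w, hw, hball hwz⟩

end Roots

section CircleFibers

open Set Filter Topology

lemma continuous_FT {f : ℝ → ℂ} (hf : Integrable f) : Continuous (FT f) := by
  have hFT : FT f = fun ξ ↦ FourierTransform.fourier f (-(ξ / 2)) := by
    ext ξ
    rw [FT, Real.fourier_real_eq_integral_exp_smul]
    congr! 3 with x
    push_cast
    ring_nf
  have hfourier : Continuous (FourierTransform.fourier f) :=
    VectorFourier.fourierIntegral_continuous Real.continuous_fourierChar continuous_inner hf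
  rw [hFT]
  fun_prop

lemma cexpEta_eq_circleExp (η : ℝ) : cexpEta η = Circle.exp (Real.pi * η) := by
  simp only [cexpEta, Circle.coe_exp, ofReal_mul]
  ring_nf

lemma continuous_cexpEta : Continuous cexpEta := by
  unfold cexpEta
  fun_prop

lemma periodic_cexpEta : Function.Periodic cexpEta 2 := fun η ↦ by
  rw [cexpEta_eq_circleExp, cexpEta_eq_circleExp, mul_add, mul_comm Real.pi 2,
    Circle.exp_add_two_pi]

lemma injOn_cexpEta : InjOn cexpEta (Ico 0 2) := by
  intro x hx y hy hxy
  simp only [cexpEta_eq_circleExp, Circle.coe_inj] at hxy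
  have hmem {t : ℝ} (ht : t ∈ Ico (0 : ℝ) 2) : Real.pi * t ∈ Ico 0 (2 * Real.pi) :=
    ⟨by have := ht.1; positivity, by nlinarith [ht.2, Real.pi_pos]⟩
  exact mul_left_cancel₀ Real.pi_ne_zero
    (Circle.exp_injOn_Ico (by simp) (hmem hx) (hmem hy) hxy)

/-- The fibre of `Λ` over `ξ` read on the unit circle, `{e^{πiη} : η ∈ Img(ξ)}`. On the circle the
endpoints `0` and `2` of the fundamental interval are identified, so that this set, unlike `Img(ξ)`,
depends upper hemicontinuously on `ξ` when `Λ` is closed and periodic. -/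
def circleImg (Λ : Set (ℝ × ℝ)) (ξ : ℝ) : Set ℂ := cexpEta '' Img Λ ξ

variable {Λ : Set (ℝ × ℝ)} {ξ₀ : ℝ} {k : ℕ}

lemma encard_circleImg (Λ : Set (ℝ × ℝ)) (ξ : ℝ) : (circleImg Λ ξ).encard = (Img Λ ξ).encard :=
  (injOn_cexpEta.mono fun _ hη ↦ hη.1).encard_image

lemma circleImg_eq_image_Icc (hper : Periodic2 Λ) (ξ : ℝ) :
    circleImg Λ ξ = cexpEta '' {η ∈ Icc 0 2 | (ξ, η) ∈ Λ} := by
  refine Subset.antisymm (image_mono fun η hη ↦ ⟨Ico_subset_Icc_self hη.1, hη.2⟩) ?_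
  rintro _ ⟨η, ⟨-, hη⟩, rfl⟩
  have hperiodic : Function.Periodic (fun η ↦ ((ξ, η) ∈ Λ, cexpEta η)) 2 := fun η ↦
    Prod.ext (propext (hper ξ η).symm) (periodic_cexpEta η)
  obtain ⟨η', hη', heq⟩ := hperiodic.exists_mem_Ico₀ two_pos η
  obtain ⟨hΛ, hexp⟩ := Prod.ext_iff.1 heq
  exact ⟨η', ⟨hη', hΛ.mp hη⟩, hexp.symm⟩

lemma upperHemicontinuous_circleImg (hclosed : IsClosed Λ) (hper : Periodic2 Λ) :
    UpperHemicontinuous (circleImg Λ) := by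
  rw [funext (circleImg_eq_image_Icc hper)]
  exact upperHemicontinuous_image (upperHemicontinuous_fiber_of_isCompact hclosed isCompact_Icc)
    continuous_cexpEta

lemma lowerHemicontinuousWithinAt_circleImg (hξ₀ : ξ₀ ∈ projStarNe Λ k) :
    LowerHemicontinuousWithinAt (circleImg Λ) (projExact Λ k) ξ₀ := by
  obtain ⟨hξ₀k, a, b, hab, φ, hφ, hrel⟩ := hξ₀
  let p (ξ : ℝ) : Polynomial ℂ := monicOfCoeffs fun i ↦ FT (φ i) ξ
  have hroots : ∀ ξ ∈ Ioo a b ∩ projExact Λ k, (p ξ).rootSet ℂ = circleImg Λ ξ := by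
    intro ξ hξ
    refine rootSet_eq_of_natDegree_le_encard (monic_monicOfCoeffs _).ne_zero ?_ ?_
    · rintro _ ⟨η, hη, rfl⟩
      rw [Polynomial.IsRoot.def, eval_monicOfCoeffs, hrel ξ hξ η hη, add_neg_cancel]
    · rw [natDegree_monicOfCoeffs, encard_circleImg, hξ.2.2]
  have hcont : ∀ z, Continuous fun ξ ↦ (p ξ).eval z := fun z ↦ by
    have := fun i ↦ continuous_FT (hφ i)
    simp only [p, eval_monicOfCoeffs]
    fun_prop
  refine (lowerHemicontinuousWithinAt_rootSet (fun ξ ↦ monic_monicOfCoeffs _)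
    (fun ξ ↦ natDegree_monicOfCoeffs _) (fun ξ ↦ IsAlgClosed.splits _)
    fun z ↦ (hcont z).continuousWithinAt).congr_of_eventuallyEq hξ₀k ?_
  filter_upwards [inter_mem_nhdsWithin _ (Ioo_mem_nhds hab.1 hab.2)] with ξ hξ
  exact hroots ξ hξ.symm

lemma eventually_le_encard_Img (hclosed : IsClosed Λ) (hper : Periodic2 Λ)
    (hξ₀ : ξ₀ ∈ projStarNe Λ k) (hdense : closure (projExact Λ k) ∈ 𝓝 ξ₀) :
    ∀ᶠ ξ in 𝓝 ξ₀, k ≤ (Img Λ ξ).encard := by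
  have hlower : LowerHemicontinuousAt (circleImg Λ) ξ₀ :=
    lowerHemicontinuousAt_of_within_of_closure_mem_nhds (upperHemicontinuous_circleImg hclosed hper)
      (lowerHemicontinuousWithinAt_circleImg hξ₀) hdense
  simp only [← encard_circleImg]
  refine eventually_le_encard_of_lowerHemicontinuousAt hlower ?_
  rw [encard_circleImg, hξ₀.1.2]

lemma mem_iUnion_projExact_union_projAtLeast {ξ : ℝ} (n : ℕ) (hξ : ξ ∈ proj Λ)
    (hk : k ≤ (Img Λ ξ).encard) :
    ξ ∈ (⋃ j ∈ Finset.Ico k n, projExact Λ j) ∪ projAtLeast Λ n := by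
  rcases le_or_gt (n : ℕ∞) (Img Λ ξ).encard with hn | hn
  · exact .inr ⟨hξ, hn⟩
  · obtain ⟨j, hj⟩ := ENat.ne_top_iff_exists.1 hn.ne_top
    rw [← hj] at hk hn
    exact .inl <| mem_biUnion (Finset.mem_Ico.2 ⟨mod_cast hk, mod_cast hn⟩) ⟨hξ, hj.symm⟩

theorem density_lemma_general (n : ℕ) (hclosed : IsClosed Λ) (hper : Periodic2 Λ) {a b : ℝ}
    (hstar : (Ioo a b ∩ projStarNe Λ k).Nonempty) (hdense : Ioo a b ⊆ closure (projExact Λ k)) :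
    ∃ c d : ℝ, c < d ∧ Ioo c d ⊆ Ioo a b ∧
      Ioo c d ∩ proj Λ ⊆ (⋃ j ∈ Finset.Ico k n, projExact Λ j) ∪ projAtLeast Λ n := by
  obtain ⟨ξ₀, hab, hξ₀⟩ := hstar
  have hI : Ioo a b ∈ 𝓝 ξ₀ := isOpen_Ioo.mem_nhds hab
  have hcard : ∀ᶠ ξ in 𝓝 ξ₀, k ≤ (Img Λ ξ).encard :=
    eventually_le_encard_Img hclosed hper hξ₀ (mem_of_superset hI hdense)
  obtain ⟨c, d, hcd, hJ⟩ := mem_nhds_iff_exists_Ioo_subset.1 (inter_mem hI hcard)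
  exact ⟨c, d, hcd.1.trans hcd.2, fun ξ hξ ↦ (hJ hξ).1, fun ξ hξ ↦
    mem_iUnion_projExact_union_projAtLeast n hξ.2 (hJ hξ.1).2⟩

end CircleFibers

theorem density_lemma (n : ℕ) (hn : 2 ≤ n) (Λ : Set (ℝ × ℝ))
    (hclosed : IsClosed Λ) (hper : Periodic2 Λ)
    (k : ℕ) (hk2 : 2 ≤ k) (hkn : k ≤ n - 1) (a b : ℝ) (hab : a < b)
    (hdense : Set.Ioo a b ⊆ closure (Set.Ioo a b ∩ projStarNe Λ k)) :
    ∃ c d : ℝ, c < d ∧ Set.Ioo c d ⊆ Set.Ioo a b ∧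
      Set.Ioo c d ∩ proj Λ ⊆
        (⋃ j ∈ Finset.Ico k n, projExact Λ j) ∪ projAtLeast Λ n := by
  exact density_lemma_general n hclosed hper
    (closure_nonempty_iff.1 ((Set.nonempty_Ioo.2 hab).mono hdense))
    (hdense.trans (closure_mono fun _ hξ ↦ hξ.2.1))
end

section
/- Let n ≥ 2 be an integer and let Λ ⊂ ℝ² be a closed set that is 2-periodic with respect to the second variable. Let 2 ≤ k ≤ n−1 and define τ : Π^k(Λ) → ℂ by τ(ξ) = ∏_{p=2}^{k} ∏_{q=1}^{p−1} (e^{πiη_p} − e^{πiη_q})², where η_1 < ⋯ < η_k are the elements of Img(ξ). If ξ ∈ Π^{k*}_{ne}(Λ), then τ ∈ P^{Π^k(Λ),ξ}_2, i.e., there exist an open interval I containing ξ and φ ∈ L¹(ℝ) such that φ̂ = τ on I ∩ Π^k(Λ). -/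
open MeasureTheory Complex

/-- `τ` agrees on `Π^k(Λ)` with `ξ ↦ ∏_{q<p} (e^{πiη_p} - e^{πiη_q})²`, where
`η_1 < ⋯ < η_k` enumerate `Img(ξ)`. -/
def tauSpec (Λ : Set (ℝ × ℝ)) (k : ℕ) (τ : ℝ → ℂ) : Prop :=
  ∀ ξ' ∈ projExact Λ k, ∀ η : Fin k → ℝ, StrictMono η → Set.range η = Img Λ ξ' →
    τ ξ' = ∏ p : Fin k, ∏ q : Fin k,
      if (q : ℕ) < (p : ℕ) then (cexpEta (η p) - cexpEta (η q)) ^ 2 else 1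

/-!
Near a point `ξ` the Fourier transforms of integrable functions form a unital algebra: convolution
gives products, and a Schwartz function whose transform is `1` near `ξ` supplies the unit. If
`ξ ∈ Π^{k*}_{ne}(Λ)`, then `z ^ k + ∑ i, φ̂ i(x) z ^ i` has the `k` distinct numbers `e^{πiη}`,
`η ∈ Img(x)`, as its roots, so `τ x` is the discriminant of this polynomial, which is an integer
polynomial in its coefficients and hence belongs to that algebra.
-/

open Filter Topology Matrix
open scoped FourierTransform Convolution ContDiff

section FourierTransform

lemma FT_eq_fourier (f : ℝ → ℂ) (ξ : ℝ) : FT f ξ = 𝓕 f (-ξ / 2) := by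
  rw [Real.fourier_real_eq_integral_exp_smul, FT]
  congr 1
  ext x
  rw [smul_eq_mul]
  congr 2
  push_cast
  ring

lemma integrable_FT_kernel_mul {f : ℝ → ℂ} (hf : Integrable f) (ξ : ℝ) :
    Integrable fun x : ℝ => Complex.exp (Real.pi * Complex.I * x * ξ) * f x := by
  refine hf.bdd_mul (c := 1) (by fun_prop) (Eventually.of_forall fun x => ?_)
  simp [Complex.norm_exp]

lemma FT_add {f g : ℝ → ℂ} (hf : Integrable f) (hg : Integrable g) :
    FT (f + g) = FT f + FT g := by
  ext ξ
  simp only [FT, Pi.add_apply, mul_add]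
  exact integral_add (integrable_FT_kernel_mul hf ξ) (integrable_FT_kernel_mul hg ξ)

lemma FT_const_smul (c : ℂ) (f : ℝ → ℂ) : FT (c • f) = c • FT f := by
  ext ξ
  simp only [FT, Pi.smul_apply, smul_eq_mul, mul_left_comm _ c, integral_const_mul]

lemma FT_convolution {f g : ℝ → ℂ} (hf : Integrable f) (hg : Integrable g) :
    FT (f ⋆[ContinuousLinearMap.mul ℂ ℂ] g) = FT f * FT g := by
  ext ξ
  simp only [Pi.mul_apply, FT_eq_fourier]
  exact Real.fourier_mul_convolution_eq hf hg _

lemma exists_integrable_FT_eventuallyEq_one (ξ : ℝ) :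
    ∃ f : ℝ → ℂ, Integrable f ∧ FT f =ᶠ[𝓝 ξ] 1 := by
  let bump : ContDiffBump (-ξ / 2) := default
  have hsupp : HasCompactSupport (Complex.ofRealCLM ∘ bump) :=
    bump.hasCompactSupport.comp_left (map_zero _)
  let g : SchwartzMap ℝ ℂ := hsupp.toSchwartzMap (Complex.ofRealCLM.contDiff.comp bump.contDiff)
  refine ⟨(𝓕⁻ g : SchwartzMap ℝ ℂ), (𝓕⁻ g).integrable, ?_⟩
  have hFT (x : ℝ) : FT (𝓕⁻ g : SchwartzMap ℝ ℂ) x = bump (-x / 2) := by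
    rw [FT_eq_fourier, ← SchwartzMap.fourier_coe, FourierTransform.fourier_fourierInv_eq]
    rfl
  have hlim : Tendsto (fun x : ℝ => -x / 2) (𝓝 ξ) (𝓝 (-ξ / 2)) :=
    Continuous.tendsto (by fun_prop) ξ
  filter_upwards [hlim.eventually bump.eventuallyEq_one] with x hx
  simp [hFT, hx]

end FourierTransform

section LocalFourierAlgebra

variable {E : Set ℝ} {ξ : ℝ}

/-- The functions that agree, on the part of `E` near `ξ`, with the Fourier transform of an
integrable function. This is the class `P_2^{E,ξ}` of the paper; its elements are taken to be
functions on all of `ℝ`, whose values away from `ξ` or outside `E` are irrelevant. -/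
noncomputable def localFourierAlgebra (E : Set ℝ) (ξ : ℝ) : Subalgebra ℂ (ℝ → ℂ) where
  carrier := {ψ | ∃ f : ℝ → ℂ, Integrable f ∧ FT f =ᶠ[𝓝[E] ξ] ψ}
  add_mem' := by
    rintro ψ₁ ψ₂ ⟨f, hf, hfψ⟩ ⟨g, hg, hgψ⟩
    exact ⟨f + g, hf.add hg, FT_add hf hg ▸ hfψ.add hgψ⟩
  mul_mem' := by
    rintro ψ₁ ψ₂ ⟨f, hf, hfψ⟩ ⟨g, hg, hgψ⟩
    exact ⟨f ⋆[ContinuousLinearMap.mul ℂ ℂ] g, hf.integrable_convolution _ hg,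
      FT_convolution hf hg ▸ hfψ.mul hgψ⟩
  algebraMap_mem' c := by
    obtain ⟨f, hf, hf_one⟩ := exists_integrable_FT_eventuallyEq_one ξ
    refine ⟨c • f, hf.smul c, ?_⟩
    filter_upwards [nhdsWithin_le_nhds hf_one] with x hx
    simp [FT_const_smul, hx]

lemma FT_mem_localFourierAlgebra {f : ℝ → ℂ} (hf : Integrable f) :
    FT f ∈ localFourierAlgebra E ξ :=
  ⟨f, hf, EventuallyEq.rfl⟩

lemma mem_localFourierAlgebra_of_eventuallyEq {ψ₁ ψ₂ : ℝ → ℂ}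
    (hψ₁ : ψ₁ ∈ localFourierAlgebra E ξ) (h : ψ₁ =ᶠ[𝓝[E] ξ] ψ₂) :
    ψ₂ ∈ localFourierAlgebra E ξ :=
  let ⟨f, hf, hfψ⟩ := hψ₁
  ⟨f, hf, hfψ.trans h⟩

lemma exists_Ioo_FT_eq_of_mem_localFourierAlgebra {ψ : ℝ → ℂ}
    (hψ : ψ ∈ localFourierAlgebra E ξ) :
    ∃ a b : ℝ, ξ ∈ Set.Ioo a b ∧ ∃ φ : ℝ → ℂ, Integrable φ ∧
      ∀ x ∈ Set.Ioo a b ∩ E, FT φ x = ψ x := by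
  obtain ⟨φ, hφ, hφψ⟩ := hψ
  obtain ⟨a, b, hξ, hsub⟩ := mem_nhds_iff_exists_Ioo_subset.1 (eventually_nhdsWithin_iff.1 hφψ)
  exact ⟨a, b, hξ, φ, hφ, fun x hx => hsub hx.1 hx.2⟩

end LocalFourierAlgebra

section Discriminant

variable {R S : Type*} [CommRing R] [CommRing S] {k : ℕ}

/-- The companion matrix of the monic polynomial `X ^ k + ∑ i, c i * X ^ i`: the matrix of
multiplication by `X` in `R[X] / (X ^ k + ∑ i, c i * X ^ i)` with respect to the powers of `X`. -/
def companionMatrix (c : Fin k → R) : Matrix (Fin k) (Fin k) R :=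
  of fun i j => if (j : ℕ) + 1 = k then -c i else if (i : ℕ) = j + 1 then 1 else 0

/-- The discriminant of the monic polynomial `X ^ k + ∑ i, c i * X ^ i`, encoded as the Gram
determinant of the trace form of `R[X] / (X ^ k + ∑ i, c i * X ^ i)`. In contrast to the Sylvester
determinant `Polynomial.discr`, this is immediately computed from the power sums of the roots. -/
def monicDiscr (c : Fin k → R) : R :=
  det (of fun i j : Fin k => trace (companionMatrix c ^ (i + j : ℕ)))

lemma companionMatrix_map (f : R →+* S) (c : Fin k → R) :
    (companionMatrix c).map f = companionMatrix (f ∘ c) := by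
  ext i j
  simp only [companionMatrix, map_apply, of_apply, Function.comp_apply, apply_ite f, map_neg,
    map_one, map_zero]

lemma map_monicDiscr (f : R →+* S) (c : Fin k → R) :
    f (monicDiscr c) = monicDiscr (f ∘ c) := by
  rw [monicDiscr, RingHom.map_det]
  congr 1
  ext i j
  simp only [RingHom.mapMatrix_apply, map_apply, of_apply, AddMonoidHom.map_trace,
    Matrix.map_pow, companionMatrix_map]

lemma vandermonde_mul_companionMatrix {c r : Fin k → R}
    (hr : ∀ j, ∑ i : Fin k, c i * r j ^ (i : ℕ) = -r j ^ k) :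
    vandermonde r * companionMatrix c = diagonal r * vandermonde r := by
  ext l j
  rw [diagonal_mul, mul_apply, vandermonde_apply, ← pow_succ']
  by_cases hj : (j : ℕ) + 1 = k
  · have hneg : ∑ i : Fin k, r l ^ (i : ℕ) * -c i = r l ^ k := by
      simp only [mul_comm (r l ^ _), neg_mul, Finset.sum_neg_distrib, hr, neg_neg]
    simpa [companionMatrix, hj] using hneg
  · have hlt : (j : ℕ) + 1 < k := by omega
    have hsucc (i : Fin k) : (i : ℕ) = j + 1 ↔ i = ⟨j + 1, hlt⟩ := by simp [Fin.ext_iff]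
    simp [companionMatrix, hj, hsucc]

lemma trace_pow_eq_sum_pow_of_mul_eq_diagonal_mul {n : Type*} [Fintype n] [DecidableEq n]
    {V A : Matrix n n R} {d : n → R} (hV : IsUnit V) (h : V * A = diagonal d * V) (m : ℕ) :
    trace (A ^ m) = ∑ i, d i ^ m := by
  have hpow : V * A ^ m = diagonal d ^ m * V := SemiconjBy.pow_right h m
  have hconj : V * A ^ m * V⁻¹ = diagonal (d ^ m) := by
    rw [hpow, mul_nonsing_inv_cancel_right _ _ ((isUnit_iff_isUnit_det V).1 hV), diagonal_pow]
  rw [← trace_conj hV, hconj, trace_diagonal]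
  rfl

lemma monicDiscr_eq_det_vandermonde_sq {c r : Fin k → R} (hunit : IsUnit (vandermonde r))
    (hr : ∀ j, ∑ i : Fin k, c i * r j ^ (i : ℕ) = -r j ^ k) :
    monicDiscr c = (vandermonde r).det ^ 2 := by
  have hgram : (of fun i j : Fin k => trace (companionMatrix c ^ (i + j : ℕ))) =
      (vandermonde r)ᵀ * vandermonde r := by
    ext i j
    rw [vandermonde_transpose_mul_vandermonde, of_apply,
      trace_pow_eq_sum_pow_of_mul_eq_diagonal_mul hunit (vandermonde_mul_companionMatrix hr)]
  rw [monicDiscr, hgram, det_mul, det_transpose, sq]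

lemma isUnit_vandermonde_of_injective {K : Type*} [Field K] {r : Fin k → K}
    (hr : Function.Injective r) : IsUnit (vandermonde r) :=
  (isUnit_iff_isUnit_det _).2 (det_vandermonde_ne_zero_iff.2 hr).isUnit

lemma prod_prod_sub_sq_eq_det_vandermonde_sq (r : Fin k → R) :
    (∏ p : Fin k, ∏ q : Fin k, if (q : ℕ) < (p : ℕ) then (r p - r q) ^ 2 else 1) =
      (vandermonde r).det ^ 2 := by
  rw [det_vandermonde, Finset.prod_comm, ← Finset.prod_pow]
  refine Finset.prod_congr rfl fun q _ => ?_
  rw [← Finset.prod_pow, ← Finset.prod_filter]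
  exact Finset.prod_congr (by ext; simp) fun _ _ => rfl

end Discriminant

section ExponentialRoots

variable {Λ : Set (ℝ × ℝ)} {k : ℕ}

lemma injOn_cexpEta_s6 : Set.InjOn cexpEta (Set.Ico 0 2) := by
  have hcircle (η : ℝ) : cexpEta η = AddCircle.toCircle (T := 2) η := by
    rw [cexpEta, AddCircle.toCircle_apply_mk, Circle.coe_exp]
    congr 1
    push_cast
    ring
  have : Fact ((0 : ℝ) < 2) := ⟨two_pos⟩
  intro η₁ h₁ η₂ h₂ heq
  rw [hcircle, hcircle, Circle.coe_inj] at heq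
  refine (AddCircle.coe_eq_coe_iff_of_mem_Ico (p := 2) (a := 0) ?_ ?_).1
    (AddCircle.injective_toCircle two_ne_zero heq) <;> simpa

lemma exists_strictMono_range_eq_of_encard_eq {α : Type*} [LinearOrder α] {s : Set α}
    (hs : s.encard = k) : ∃ η : Fin k → α, StrictMono η ∧ Set.range η = s := by
  lift s to Finset α using Set.finite_of_encard_eq_coe hs
  have hcard : s.card = k := by simpa [Set.encard_coe_eq_coe_finsetCard] using hs
  exact ⟨s.orderEmbOfFin hcard, (s.orderEmbOfFin hcard).strictMono, s.range_orderEmbOfFin hcard⟩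

lemma tauSpec.eq_monicDiscr {τ : ℝ → ℂ} (hτ : tauSpec Λ k τ) {x : ℝ} (hx : x ∈ projExact Λ k)
    {c : Fin k → ℂ}
    (hroot : ∀ η ∈ Img Λ x, ∑ i : Fin k, c i * cexpEta η ^ (i : ℕ) = -cexpEta η ^ k) :
    τ x = monicDiscr c := by
  obtain ⟨η, hη, hrange⟩ := exists_strictMono_range_eq_of_encard_eq hx.2
  have hmem (j : Fin k) : η j ∈ Img Λ x := hrange ▸ Set.mem_range_self j
  have hinj : Function.Injective (cexpEta ∘ η) := fun i j hij =>
    hη.injective (injOn_cexpEta_s6 (hmem i).1 (hmem j).1 hij)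
  calc τ x = (vandermonde (cexpEta ∘ η)).det ^ 2 :=
        (hτ x hx η hη hrange).trans (prod_prod_sub_sq_eq_det_vandermonde_sq (cexpEta ∘ η))
    _ = monicDiscr c := (monicDiscr_eq_det_vandermonde_sq (isUnit_vandermonde_of_injective hinj)
        fun j => hroot (η j) (hmem j)).symm

end ExponentialRoots

lemma monicDiscr_FT_mem_localFourierAlgebra {E : Set ℝ} {ξ : ℝ} {k : ℕ} {φ : Fin k → ℝ → ℂ}
    (hφ : ∀ i, Integrable (φ i)) :
    (fun x => monicDiscr fun i => FT (φ i) x) ∈ localFourierAlgebra E ξ := by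
  let c (i : Fin k) : localFourierAlgebra E ξ := ⟨FT (φ i), FT_mem_localFourierAlgebra (hφ i)⟩
  have hval : (↑(monicDiscr c) : ℝ → ℂ) = fun x => monicDiscr fun i => FT (φ i) x := by
    ext x
    exact map_monicDiscr ((Pi.evalRingHom _ x).comp (localFourierAlgebra E ξ).val.toRingHom) c
  exact hval ▸ (monicDiscr c).2

theorem tau_in_P2_general (Λ : Set (ℝ × ℝ)) (k : ℕ) (τ : ℝ → ℂ) (hτ : tauSpec Λ k τ) (ξ : ℝ)
    (hξ : ξ ∈ projStarNe Λ k) :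
    ∃ a b : ℝ, ξ ∈ Set.Ioo a b ∧ ∃ φ : ℝ → ℂ, Integrable φ ∧
      ∀ x ∈ Set.Ioo a b ∩ projExact Λ k, FT φ x = τ x := by
  obtain ⟨-, a, b, hab, φ, hφ, hroot⟩ := hξ
  apply exists_Ioo_FT_eq_of_mem_localFourierAlgebra
  refine mem_localFourierAlgebra_of_eventuallyEq (monicDiscr_FT_mem_localFourierAlgebra hφ) ?_
  filter_upwards [self_mem_nhdsWithin, nhdsWithin_le_nhds (Ioo_mem_nhds hab.1 hab.2)] with x hx hxab
  exact (hτ.eq_monicDiscr hx (hroot x ⟨hxab, hx⟩)).symm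

theorem tau_in_P2 (n : ℕ) (hn : 2 ≤ n) (Λ : Set (ℝ × ℝ))
    (hclosed : IsClosed Λ) (hper : Periodic2 Λ)
    (k : ℕ) (hk2 : 2 ≤ k) (hkn : k ≤ n - 1)
    (τ : ℝ → ℂ) (hτ : tauSpec Λ k τ) (ξ : ℝ) (hξ : ξ ∈ projStarNe Λ k) :
    ∃ a b : ℝ, ξ ∈ Set.Ioo a b ∧ ∃ φ : ℝ → ℂ, MeasureTheory.Integrable φ ∧
      ∀ x ∈ Set.Ioo a b ∩ projExact Λ k, FT φ x = τ x :=
  tau_in_P2_general Λ k τ hτ ξ hξ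
end
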